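/- Let n ≡ 1 (mod 8) be a positive integer that is not divisible by 4 and not of the form 4^e(8m - 1). Then there exist integers a, b, c with n = a² + b² + c² and 4 ∣ c. -/

import Mathlib

/-!
If `n` is a square there is nothing to prove. Otherwise write `n = a² + b² + c²` with `a` odd and
`b`, `c` even; only the case `b ≡ c ≡ 2 (mod 4)` needs work. The point `v = ai + bj + ck` is then
moved to another integral point of the same sphere by the rational rotation
`v ↦ q⁻¹vq = (star q * v * q) / p`, where `q` is an integral quaternion of prime norm
`p ≡ 3 (mod 4)`. Modulo 4 such a rotation always turns the `j`-coordinate into a multiple of 4.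

The rotated point is integral as soon as `q` lies in the right ideal generated by `p` and `t + v`,
where `p` divides the norm `t² + n` of `t + v`. Quadratic reciprocity and Dirichlet's theorem
provide `p` and `t`, because `n` is not a square, and Minkowski's theorem finds an element of norm
`p` in the ideal. Minkowski's theorem also gives the starting decomposition: a positive definite
integral ternary form of determinant 1 is a sum of three squares of linear forms, and a suitable
such form represents `n`.
-/

open Matrix MeasureTheory

theorem exists_ne_zero_dotProduct_mulVec_self_lt {ι : Type*} [Fintype ι] [DecidableEq ι]
    {T : Matrix ι ι ℝ} (hT : T.det ≠ 0) {r : ℝ}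
    (hr : 2 ^ Fintype.card ι * ENNReal.ofReal |T.det| <
      volume (Metric.ball (0 : EuclideanSpace ℝ ι) √r)) :
    ∃ z : ι → ℤ, z ≠ 0 ∧ (T *ᵥ (Int.cast ∘ z)) ⬝ᵥ (T *ᵥ (Int.cast ∘ z)) < r := by
  let b : Module.Basis ι ℝ (ι → ℝ) := (Pi.basisFun ℝ ι).map
    ((toLin' T).equivOfDetNeZero (by rwa [LinearMap.det_toLin']))
  have b_apply (j i : ι) : b j i = T i j := by simp [b]
  have hfund := ZSpan.isAddFundamentalDomain' b volume
  have : Countable (Submodule.span ℤ (Set.range b)).toAddSubgroup :=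
    inferInstanceAs (Countable (Submodule.span ℤ (Set.range b)))
  have hvol : volume (ZSpan.fundamentalDomain b) * 2 ^ Module.finrank ℝ (ι → ℝ) <
      volume (WithLp.toLp 2 ⁻¹' Metric.ball (0 : EuclideanSpace ℝ ι) √r) := by
    have hdet : (Matrix.of b).det = T.det := by
      rw [← det_transpose]
      congr 1
      ext i j
      exact b_apply j i
    rwa [(PiLp.volume_preserving_toLp ι).measure_preimage
      Metric.isOpen_ball.measurableSet.nullMeasurableSet, ZSpan.volume_fundamentalDomain, hdet,
      Module.finrank_fintype_fun_eq_card, mul_comm]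
  obtain ⟨⟨x, hx⟩, hx0, hxr⟩ := exists_ne_zero_mem_lattice_of_measure_mul_two_pow_lt_measure hfund
    (fun x hx ↦ by simpa using hx)
    ((convex_ball 0 √r).linear_preimage (WithLp.linearEquiv 2 ℝ (ι → ℝ)).symm.toLinearMap) hvol
  obtain ⟨z, rfl⟩ := Submodule.mem_span_range_iff_exists_fun ℤ |>.mp hx
  have hTz : T *ᵥ (Int.cast ∘ z) = ∑ j, z j • b j := by
    ext i
    simp [mulVec, dotProduct, b_apply, mul_comm]
  refine ⟨z, ?_, ?_⟩
  · rintro rfl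
    simp at hx0
  · rw [hTz]
    have hnorm : ‖WithLp.toLp 2 (∑ j, z j • b j)‖ ^ 2 < r :=
      (Real.lt_sqrt (norm_nonneg _)).mp (mem_ball_zero_iff.mp hxr)
    rw [EuclideanSpace.real_norm_sq_eq] at hnorm
    simpa only [dotProduct, ← sq] using hnorm

theorem exists_ne_zero_dotProduct_mulVec_self_lt_two {T : Matrix (Fin 3) (Fin 3) ℝ}
    (hT : T.det ≠ 0) (hT2 : T.det ^ 2 ≤ 2) :
    ∃ z : Fin 3 → ℤ, z ≠ 0 ∧ (T *ᵥ (Int.cast ∘ z)) ⬝ᵥ (T *ᵥ (Int.cast ∘ z)) < 2 := by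
  refine exists_ne_zero_dotProduct_mulVec_self_lt hT ?_
  have hlt : 8 * |T.det| < √2 ^ 3 * (Real.pi * 4 / 3) := calc
    8 * |T.det| ≤ 8 * √2 := by gcongr; exact Real.abs_le_sqrt hT2
    _ < √2 * (2 * (Real.pi * 4 / 3)) := by
      rw [mul_comm]
      gcongr
      linarith [Real.pi_gt_three]
    _ = √2 ^ 3 * (Real.pi * 4 / 3) := by
      rw [pow_succ', Real.sq_sqrt zero_le_two, mul_assoc]
  rw [EuclideanSpace.volume_ball_fin_three, Fintype.card_fin, ← ENNReal.ofReal_pow (by positivity),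
    ← ENNReal.ofReal_mul (by positivity),
    show (2 : ENNReal) ^ 3 = ENNReal.ofReal 8 by norm_num, ← ENNReal.ofReal_mul (by norm_num)]
  exact (ENNReal.ofReal_lt_ofReal_iff (by positivity)).mpr hlt

theorem exists_ne_zero_dotProduct_mulVec_self_lt_two_mul {T : Matrix (Fin 4) (Fin 4) ℝ} {m : ℝ}
    (hm : 0 < m) (hT : T.det = m ^ 2) :
    ∃ z : Fin 4 → ℤ, z ≠ 0 ∧ (T *ᵥ (Int.cast ∘ z)) ⬝ᵥ (T *ᵥ (Int.cast ∘ z)) < 2 * m := by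
  refine exists_ne_zero_dotProduct_mulVec_self_lt (by rw [hT]; positivity) ?_
  have hlt : 16 * m ^ 2 < √(2 * m) ^ 4 * (Real.pi ^ 2 / 2) := calc
    16 * m ^ 2 = 4 * m ^ 2 * (8 / 2) := by ring
    _ < 4 * m ^ 2 * (Real.pi ^ 2 / 2) := by
      gcongr
      nlinarith [Real.pi_gt_three]
    _ = √(2 * m) ^ 4 * (Real.pi ^ 2 / 2) := by
      rw [pow_mul √(2 * m) 2 2, Real.sq_sqrt (by positivity)]
      ring
  rw [InnerProductSpace.volume_ball_of_dim_even (k := 2) (by simp), finrank_euclideanSpace_fin,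
    Fintype.card_fin, hT, abs_of_pos (by positivity), ← ENNReal.ofReal_pow (by positivity),
    ← ENNReal.ofReal_mul (by positivity),
    show (2 : ENNReal) ^ 4 = ENNReal.ofReal 16 by norm_num, ← ENNReal.ofReal_mul (by norm_num)]
  exact (ENNReal.ofReal_lt_ofReal_iff (by positivity)).mpr (by simpa using hlt)

section IntegralForm

variable {ι R : Type*}

theorem isSymm_of_posDef_map_intCast {S : Matrix ι ι ℤ}
    (hS : (S.map (Int.cast : ℤ → ℝ)).PosDef) : S.IsSymm :=
  map_injective (f := (Int.cast : ℤ → ℝ)) Int.cast_injective <|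
    transpose_map.symm.trans <| (conjTranspose_eq_transpose_of_trivial _).symm.trans
      hS.isHermitian.eq

variable [Fintype ι]

theorem intCast_dotProduct_mulVec_self (S : Matrix ι ι ℤ) (z : ι → ℤ) :
    ((z ⬝ᵥ S *ᵥ z : ℤ) : ℝ) = Int.cast ∘ z ⬝ᵥ S.map Int.cast *ᵥ (Int.cast ∘ z) := by
  simp [dotProduct, mulVec]

theorem dotProduct_mulVec_pos_of_posDef_map_intCast {S : Matrix ι ι ℤ}
    (hS : (S.map (Int.cast : ℤ → ℝ)).PosDef) {z : ι → ℤ} (hz : z ≠ 0) : 0 < z ⬝ᵥ S *ᵥ z := by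
  have hz' : (Int.cast ∘ z : ι → ℝ) ≠ 0 := fun h ↦
    hz (funext fun i ↦ Int.cast_eq_zero.mp (congrFun h i))
  have hpos := hS.dotProduct_mulVec_pos hz'
  rw [star_trivial, ← intCast_dotProduct_mulVec_self] at hpos
  exact_mod_cast hpos

theorem dotProduct_add_vecMulVec_self_mulVec [CommRing R] (S : Matrix ι ι R) (u z : ι → R) :
    z ⬝ᵥ (S + vecMulVec u u) *ᵥ z = z ⬝ᵥ S *ᵥ z + (u ⬝ᵥ z) ^ 2 := by
  rw [add_mulVec, dotProduct_add, vecMulVec_mulVec, op_smul_eq_smul, dotProduct_smul,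
    smul_eq_mul, dotProduct_comm z u, sq]

theorem det_add_vecMulVec_mulVec_self [DecidableEq ι] [CommRing R] (S : Matrix ι ι R) (v : ι → R) :
    (S + vecMulVec (S *ᵥ v) (S *ᵥ v)).det = S.det * (1 + v ⬝ᵥ S *ᵥ v) := by
  rw [← mul_vecMulVec, ← mul_one_add, det_mul, vecMulVec_eq Unit,
    det_one_add_replicateCol_mul_replicateRow, dotProduct_comm]

theorem transpose_mulVec_cross_mulVec [CommRing R] (M : Matrix (Fin 3) (Fin 3) R)
    (v w : Fin 3 → R) :
    Mᵀ *ᵥ (crossProduct (M *ᵥ v) (M *ᵥ w)) = M.det • crossProduct v w := by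
  ext i
  fin_cases i <;>
  · simp only [mulVec, dotProduct, Fin.sum_univ_three, cross_apply, det_fin_three, transpose_apply,
      Pi.smul_apply, smul_eq_mul, Fin.zero_eta, Fin.mk_one, Fin.reduceFinMk, cons_val]
    ring

end IntegralForm

section TernaryForm

variable {S : Matrix (Fin 3) (Fin 3) ℤ}

open scoped MatrixOrder in
theorem exists_dotProduct_mulVec_eq_one (hS : (S.map (Int.cast : ℤ → ℝ)).PosDef)
    (hdet : S.det ≤ 2) : ∃ z, z ⬝ᵥ S *ᵥ z = 1 := by
  obtain ⟨T, hT⟩ := CStarAlgebra.nonneg_iff_eq_star_mul_self.mp hS.posSemidef.nonneg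
  rw [star_eq_conjTranspose, conjTranspose_eq_transpose_of_trivial] at hT
  have hdetT : (S.det : ℝ) = T.det ^ 2 := by
    rw [Int.cast_det, hT, det_mul, det_transpose, sq]
  have hdet_pos := hS.det_pos
  obtain ⟨z, hz, hlt⟩ := exists_ne_zero_dotProduct_mulVec_self_lt_two (T := T)
    (fun h ↦ by simp [hT, h] at hdet_pos) (by rw [← hdetT]; exact_mod_cast hdet)
  have hcast : ((z ⬝ᵥ S *ᵥ z : ℤ) : ℝ) = (T *ᵥ (Int.cast ∘ z)) ⬝ᵥ (T *ᵥ (Int.cast ∘ z)) := by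
    rw [intCast_dotProduct_mulVec_self, hT, ← mulVec_mulVec, dotProduct_mulVec, vecMul_transpose]
  rw [← hcast] at hlt
  have hz_lt : z ⬝ᵥ S *ᵥ z < 2 := by exact_mod_cast hlt
  have hz_pos := dotProduct_mulVec_pos_of_posDef_map_intCast hS hz
  exact ⟨z, by lia⟩

/- Adding the square of `w ↦ w ⬝ᵥ S *ᵥ v` to the form only doubles the determinant, so the new form
still takes the value 1; there the added square has to vanish. -/
theorem exists_dotProduct_mulVec_eq_one_and_eq_zero (hS : (S.map (Int.cast : ℤ → ℝ)).PosDef)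
    (hdet : S.det = 1) {v : Fin 3 → ℤ} (hv : v ⬝ᵥ S *ᵥ v = 1) :
    ∃ w, w ⬝ᵥ S *ᵥ w = 1 ∧ w ⬝ᵥ S *ᵥ v = 0 := by
  have hS' : ((S + vecMulVec (S *ᵥ v) (S *ᵥ v)).map (Int.cast : ℤ → ℝ)).PosDef := by
    have hmap : (S + vecMulVec (S *ᵥ v) (S *ᵥ v)).map (Int.cast : ℤ → ℝ) =
        S.map Int.cast + vecMulVec (Int.cast ∘ (S *ᵥ v)) (star (Int.cast ∘ (S *ᵥ v))) := by
      ext i j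
      simp [vecMulVec_apply]
    rw [hmap]
    exact hS.add_posSemidef (posSemidef_vecMulVec_self_star _)
  obtain ⟨w, hw⟩ := exists_dotProduct_mulVec_eq_one hS'
    (by rw [det_add_vecMulVec_mulVec_self, hdet, hv]; norm_num)
  rw [dotProduct_add_vecMulVec_self_mulVec, dotProduct_comm _ w] at hw
  have hw_ne : w ≠ 0 := by rintro rfl; simp at hw
  have hw_pos := dotProduct_mulVec_pos_of_posDef_map_intCast hS hw_ne
  have hsq := sq_nonneg (w ⬝ᵥ S *ᵥ v)
  exact ⟨w, by lia, by rw [← sq_eq_zero_iff]; lia⟩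

theorem exists_eq_transpose_mul_self (hS : (S.map (Int.cast : ℤ → ℝ)).PosDef)
    (hdet : S.det = 1) : ∃ M : Matrix (Fin 3) (Fin 3) ℤ, S = Mᵀ * M := by
  have hsymm : Sᵀ = S := isSymm_of_posDef_map_intCast hS
  have hcomm (x y : Fin 3 → ℤ) : x ⬝ᵥ S *ᵥ y = y ⬝ᵥ S *ᵥ x := by
    rw [dotProduct_mulVec, ← mulVec_transpose, hsymm, dotProduct_comm]
  obtain ⟨v, hvv⟩ := exists_dotProduct_mulVec_eq_one hS (by lia)
  obtain ⟨w, hww, hwv⟩ := exists_dotProduct_mulVec_eq_one_and_eq_zero hS hdet hvv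
  set z := crossProduct (S *ᵥ v) (S *ᵥ w) with hz
  have hSz : S *ᵥ z = crossProduct v w := by
    simpa [hsymm, hdet] using transpose_mulVec_cross_mulVec S v w
  have hvz : v ⬝ᵥ S *ᵥ z = 0 := by rw [hSz, dot_self_cross]
  have hwz : w ⬝ᵥ S *ᵥ z = 0 := by rw [hSz, dot_cross_self]
  have hzz : z ⬝ᵥ S *ᵥ z = 1 := by
    rw [hSz, hz, cross_dot_cross]
    simp only [dotProduct_comm (S *ᵥ _), hvv, hww, hwv, one_mul, zero_mul, sub_zero]
  set P : Matrix (Fin 3) (Fin 3) ℤ := Matrix.of ![v, w, z]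
  have hPSP : P * S * Pᵀ = 1 := by
    have hentry (i j : Fin 3) : (P * S * Pᵀ) i j = P i ⬝ᵥ S *ᵥ P j := by
      rw [Matrix.mul_assoc]
      rfl
    ext i j
    rw [hentry]
    fin_cases i <;> fin_cases j
    exacts [hvv, (hcomm v w).trans hwv, hvz, hwv, hww, hwz, (hcomm z v).trans hvz,
      (hcomm z w).trans hwz, hzz]
  refine ⟨P * S, ?_⟩
  calc S = S * (Pᵀ * (P * S)) := by rw [mul_eq_one_comm.mp hPSP, mul_one]
    _ = (P * S)ᵀ * (P * S) := by rw [transpose_mul, hsymm, Matrix.mul_assoc]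

end TernaryForm

section ThreeSquares

/-- The Gram matrix of the ternary form `A X² + 2x XY + q Y² + 2 XZ + n Z²`, which takes the value
`n` at `(0, 0, 1)`; the other coefficients are free to make it positive definite and unimodular. -/
def representingForm {R : Type*} [Zero R] [One R] (A x q n : R) : Matrix (Fin 3) (Fin 3) R :=
  !![A, x, 1; x, q, 0; 1, 0, n]

theorem map_intCast_representingForm (A x q n : ℤ) :
    (representingForm A x q n).map (Int.cast : ℤ → ℝ) = representingForm (A : ℝ) x q n := by
  ext i j
  fin_cases i <;> fin_cases j <;> simp [representingForm]

theorem det_representingForm {R : Type*} [CommRing R] {A x d n : R}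
    (h : x ^ 2 + d = (d * n - 1) * A) : (representingForm A x (d * n - 1) n).det = 1 := by
  simp only [representingForm, det_fin_three, of_apply, cons_val]
  linear_combination -n * h

theorem posDef_representingForm {A x d n : ℝ} (hA : 0 < A) (hd : 0 < d)
    (h : x ^ 2 + d = (d * n - 1) * A) : (representingForm A x (d * n - 1) n).PosDef := by
  refine .of_dotProduct_mulVec_pos ?_ fun y hy ↦ ?_
  · ext i j
    fin_cases i <;> fin_cases j <;> simp [representingForm]
  set Q := star y ⬝ᵥ representingForm A x (d * n - 1) n *ᵥ y with hQ
  have hsum : A * d * Q =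
      d * (A * y 0 + x * y 1 + y 2) ^ 2 + (d * y 1 - x * y 2) ^ 2 + A * y 2 ^ 2 := by
    simp only [hQ, representingForm, star_trivial, mulVec, dotProduct, Fin.sum_univ_three,
      of_apply, cons_val]
    linear_combination -(d * y 1 ^ 2 + y 2 ^ 2) * h
  have hmul_pos : 0 < A * d * Q := by
    refine lt_of_le_of_ne (by rw [hsum]; positivity) fun hzero ↦ hy ?_
    rw [← hzero, eq_comm, add_eq_zero_iff_of_nonneg (by positivity) (by positivity),
      add_eq_zero_iff_of_nonneg (by positivity) (by positivity)] at hsum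
    obtain ⟨⟨h0, h1⟩, h2⟩ := hsum
    have hy2 : y 2 = 0 := by simpa [hA.ne'] using h2
    have hy1 : y 1 = 0 := by simpa [hd.ne', hy2] using h1
    have hy0 : y 0 = 0 := by simpa [hd.ne', hA.ne', hy1, hy2] using h0
    ext i
    fin_cases i <;> assumption
  exact pos_of_mul_pos_right hmul_pos (by positivity)

theorem exists_eq_sum_three_sq_of_dvd {d n x : ℤ} (hd : 0 < d) (hn : 0 < n)
    (h : d * n - 1 ∣ x ^ 2 + d) : ∃ a b c : ℤ, n = a ^ 2 + b ^ 2 + c ^ 2 := by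
  obtain ⟨A, hA⟩ := h
  have hA_pos : 0 < A := by
    have hq : 0 ≤ d * n - 1 := sub_nonneg.mpr (mul_pos hd hn)
    exact pos_of_mul_pos_right (hA ▸ by positivity) hq
  have hpos : ((representingForm A x (d * n - 1) n).map (Int.cast : ℤ → ℝ)).PosDef := by
    rw [map_intCast_representingForm]
    exact_mod_cast posDef_representingForm (A := A) (x := x) (d := d) (n := n)
      (by exact_mod_cast hA_pos) (by exact_mod_cast hd) (by exact_mod_cast hA)
  obtain ⟨M, hM⟩ := exists_eq_transpose_mul_self hpos (det_representingForm hA)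
  exact ⟨M 0 2, M 1 2, M 2 2, by
    simpa [representingForm, mul_apply, Fin.sum_univ_three, ← sq] using congr_fun₂ hM 2 2⟩

theorem exists_prime_two_mul_eq_mul_sub_one {n : ℕ} (hn : n % 8 = 1) :
    ∃ p d : ℕ, p.Prime ∧ p % 4 = 1 ∧ d % 8 = 3 ∧ (2 * p : ℤ) = d * n - 1 := by
  obtain ⟨k, rfl⟩ : ∃ k, n = 8 * k + 1 := ⟨n / 8, by lia⟩
  have hcop : IsCoprime ((12 * k + 1 : ℕ) : ℤ) ((4 * (8 * k + 1) : ℕ) : ℤ) := by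
    push_cast
    exact .mul_right ⟨1, -(3 * k), by ring⟩ ⟨-2, 3, by ring⟩
  obtain ⟨p, hlt, hp, hmod⟩ := Nat.forall_exists_prime_gt_and_zmodEq (12 * k + 1) (by lia) hcop
  rw [Int.natCast_modEq_iff] at hmod
  obtain ⟨j, hj⟩ := (Nat.modEq_iff_dvd' hlt.le).mp hmod.symm
  obtain rfl : p = 12 * k + 1 + 4 * (8 * k + 1) * j := by lia
  refine ⟨_, 8 * j + 3, hp, ?_, by lia, by push_cast; ring⟩
  rw [mul_assoc]
  lia

open NumberTheorySymbols in
theorem jacobiSym_neg_eq_one_of_two_mul_eq {p d n : ℕ} (hp : p % 4 = 1) (hd : d % 8 = 3)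
    (h : (2 * p : ℤ) = d * n - 1) : J(-d | p) = 1 := by
  have hd_odd : Odd d := Nat.odd_iff.mpr (by lia)
  have hneg_two : J(-2 | d) = 1 := by
    rw [jacobiSym.at_neg_two hd_odd, ZMod.χ₈'_nat_eq_if_mod_eight, hd, Nat.odd_iff.mp hd_odd]
    rfl
  calc J(-d | p) = J(d | p) := by
        rw [jacobiSym.neg _ (Nat.odd_iff.mpr (by lia)), ZMod.χ₄_nat_one_mod_four hp, one_mul]
    _ = J(p | d) := jacobiSym.quadratic_reciprocity_one_mod_four' hd_odd hp
    _ = J(-2 * p | d) := by rw [jacobiSym.mul_left, hneg_two, one_mul]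
    _ = 1 := by
      rw [jacobiSym.mod_left' (a₂ := 1) (Int.modEq_iff_dvd.mpr ⟨n, by lia⟩), jacobiSym.one_left]

theorem exists_dvd_sq_add_of_isSquare {p : ℕ} {d : ℤ} (h : IsSquare (-d : ZMod p)) :
    ∃ x : ℤ, (p : ℤ) ∣ x ^ 2 + d := by
  obtain ⟨y, hy⟩ := h
  obtain ⟨x, rfl⟩ := ZMod.intCast_surjective y
  refine ⟨x, ?_⟩
  rw [← ZMod.intCast_zmod_eq_zero_iff_dvd]
  push_cast
  linear_combination -hy

theorem exists_two_mul_dvd_sq_add_of_isSquare {p : ℕ} (hp : Odd p) {d : ℤ} (hd : Odd d)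
    (h : IsSquare (-d : ZMod p)) : ∃ x : ℤ, 2 * (p : ℤ) ∣ x ^ 2 + d := by
  obtain ⟨x, hx⟩ := exists_dvd_sq_add_of_isSquare h
  have hp' : Odd (p : ℤ) := by exact_mod_cast hp
  have hcop : IsCoprime (2 : ℤ) p := Int.isCoprime_two_left.mpr hp'
  rcases Int.even_or_odd x with hx_even | hx_odd
  · refine ⟨x + p, hcop.mul_dvd ?_ ?_⟩
    · exact ((hx_even.add_odd hp').pow.add_odd hd).two_dvd
    · rw [show (x + p) ^ 2 + d = x ^ 2 + d + p * (2 * x + p) by ring]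
      exact hx.add (dvd_mul_right _ _)
  · exact ⟨x, hcop.mul_dvd (hx_odd.pow.add_odd hd).two_dvd hx⟩

theorem exists_eq_sum_three_sq_of_mod_eight_eq_one {n : ℕ} (hn : n % 8 = 1) :
    ∃ a b c : ℤ, (n : ℤ) = a ^ 2 + b ^ 2 + c ^ 2 := by
  obtain ⟨p, d, hp, hp4, hd8, hpd⟩ := exists_prime_two_mul_eq_mul_sub_one hn
  have : Fact p.Prime := ⟨hp⟩
  have hsq : IsSquare (-(d : ℤ) : ZMod p) := by
    simpa using ZMod.isSquare_of_jacobiSym_eq_one (jacobiSym_neg_eq_one_of_two_mul_eq hp4 hd8 hpd)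
  obtain ⟨x, hx⟩ := exists_two_mul_dvd_sq_add_of_isSquare (Nat.odd_iff.mpr (by lia))
    (Int.odd_iff.mpr (by lia)) hsq
  exact exists_eq_sum_three_sq_of_dvd (by lia) (by lia) (hpd ▸ hx)

end ThreeSquares

section NonresiduePrime

theorem exists_prime_odd_eq_pow_mul_of_not_isSquare {n : ℕ} (hn : ¬IsSquare n) :
    ∃ l e m : ℕ, l.Prime ∧ Odd e ∧ ¬l ∣ m ∧ n = l ^ e * m := by
  obtain ⟨a, b, rfl, ha⟩ := Nat.sq_mul_squarefree n
  have hb : b ≠ 0 := by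
    rintro rfl
    simp at hn
  have ha1 : a ≠ 1 := fun h ↦ hn ⟨b, by rw [h, mul_one, sq]⟩
  obtain ⟨l, hl, a', rfl⟩ := Nat.exists_prime_and_dvd ha1
  obtain ⟨k, b', hb', rfl⟩ := Nat.exists_eq_pow_mul_and_not_dvd hb l hl.ne_one
  have ha' : ¬l ∣ a' := hl.coprime_iff_not_dvd.mp (Nat.coprime_of_squarefree_mul ha)
  refine ⟨l, 2 * k + 1, b' ^ 2 * a', hl, odd_two_mul_add_one k, ?_, by ring⟩
  exact hl.not_dvd_mul (mt hl.dvd_of_dvd_pow hb') ha'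

open NumberTheorySymbols

theorem exists_jacobiSym_eq_neg_one {n : ℕ} (hodd : Odd n) (hn : ¬IsSquare n) :
    ∃ r : ℕ, J(r | n) = -1 := by
  obtain ⟨l, e, m, hl, he, hlm, rfl⟩ := exists_prime_odd_eq_pow_mul_of_not_isSquare hn
  have : Fact l.Prime := ⟨hl⟩
  have hl2 : ringChar (ZMod l) ≠ 2 := by
    rw [ZMod.ringChar_zmod_n]
    rintro rfl
    have htwo := (Nat.odd_pow_iff he.pos.ne').mp (Nat.odd_mul.mp hodd).1
    exact Nat.not_odd_iff_even.mpr even_two htwo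
  obtain ⟨g, hg⟩ := FiniteField.exists_nonsquare hl2
  obtain ⟨r, hrl, hrm⟩ := Nat.chineseRemainder (hl.coprime_iff_not_dvd.mpr hlm) g.val 1
  have hr_nonsquare : ¬IsSquare ((r : ℤ) : ZMod l) := by
    rwa [Int.cast_natCast, (ZMod.natCast_eq_natCast_iff _ _ _).mpr hrl, ZMod.natCast_zmod_val]
  have hJl : J(r | l) = -1 := ZMod.nonsquare_iff_jacobiSym_eq_neg_one.mpr hr_nonsquare
  have hJm : J(r | m) = 1 := by
    rw [jacobiSym.mod_left' (a₂ := 1) (by exact_mod_cast hrm), jacobiSym.one_left]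
  have hm : m ≠ 0 := by
    rintro rfl
    exact hlm (dvd_zero l)
  refine ⟨r, ?_⟩
  rw [jacobiSym.mul_right' _ (pow_ne_zero e hl.ne_zero) hm, jacobiSym.pow_right, hJl, hJm,
    he.neg_one_pow, mul_one]

theorem exists_prime_isSquare_neg {n : ℕ} (h4 : n % 4 = 1) (hn : ¬IsSquare n) (N : ℕ) :
    ∃ p : ℕ, p.Prime ∧ N < p ∧ p % 4 = 3 ∧ IsSquare (-n : ZMod p) := by
  have hodd : Odd n := Nat.odd_iff.mpr (by lia)
  obtain ⟨r, hr⟩ := exists_jacobiSym_eq_neg_one hodd hn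
  have hrn : r.Coprime n := by
    have : NeZero n := ⟨by lia⟩
    by_contra h
    have hJ : J(r | n) = 0 := jacobiSym.eq_zero_iff_not_coprime.mpr (by simpa using h)
    lia
  have hn4 : n.Coprime 4 := by
    simpa using (Nat.coprime_two_right.mpr hodd).pow_right 2
  obtain ⟨s, hsr, hs4⟩ := Nat.chineseRemainder hn4 r 3
  have hs : s.Coprime (n * 4) := .mul_right
    (hsr.gcd_eq.trans hrn) (hs4.gcd_eq.trans (by norm_num))
  obtain ⟨p, hNp, hp, hmod⟩ := Nat.forall_exists_prime_gt_and_modEq N (by lia) hs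
  have : Fact p.Prime := ⟨hp⟩
  have hpr : p ≡ r [MOD n] := (hmod.of_mul_right 4).trans hsr
  have hp4 : p % 4 = 3 := (hmod.of_mul_left n).trans hs4
  have hp_odd : Odd p := Nat.odd_iff.mpr (by lia)
  have hJ : J(-n | p) = 1 := calc
    J(-n | p) = -J(n | p) := by
      rw [jacobiSym.neg _ hp_odd, ZMod.χ₄_nat_three_mod_four hp4, neg_one_mul]
    _ = -J(p | n) := by rw [jacobiSym.quadratic_reciprocity_one_mod_four h4 hp_odd]
    _ = -J(r | n) := by rw [jacobiSym.mod_left' (Int.natCast_modEq_iff.mpr hpr)]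
    _ = 1 := by rw [hr, neg_neg]
  exact ⟨p, hp, hNp, hp4, by simpa using ZMod.isSquare_of_jacobiSym_eq_one hJ⟩

end NonresiduePrime

section QuaternionRotation

open Quaternion

theorem exists_star_mul_im_mul_eq_smul {R : Type*} [CommRing R] {m : R} {x q y w : ℍ[R]}
    (hx : m ∣ normSq x) (hqm : normSq q = m) (hq : q = x * y + m • w) :
    ∃ v : ℍ[R], star q * x.im * q = m • v := by
  obtain ⟨k, hk⟩ := hx
  have him : x.im = (x.re : ℍ[R]) - star x := by
    ext <;> simp
  have hstar : star x * q = m • (k • y + star x * w) := calc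
    star x * q = star x * x * y + m • (star x * w) := by
      rw [hq, mul_add, mul_assoc, mul_smul_comm]
    _ = m • (k • y + star x * w) := by
      rw [star_mul_self, hk, coe_mul_eq_smul, mul_smul, smul_add]
  refine ⟨(x.re : ℍ[R]) - star q * (k • y + star x * w), ?_⟩
  calc star q * x.im * q = (x.re : ℍ[R]) * (star q * q) - star q * (star x * q) := by
        rw [him, mul_sub, sub_mul, ← coe_commutes, mul_assoc, mul_assoc]
    _ = m • ((x.re : ℍ[R]) - star q * (k • y + star x * w)) := by
      rw [star_mul_self, hqm, ← coe_commutes, coe_mul_eq_smul, hstar, mul_smul_comm, smul_sub]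

theorem re_star_mul_mul {R : Type*} [CommRing R] {v : ℍ[R]} (hv : v.re = 0) (q : ℍ[R]) :
    (star q * v * q).re = 0 := by
  simp only [re_mul, imI_mul, imJ_mul, imK_mul, re_star, imI_star, imJ_star, imK_star, hv]
  ring

theorem exists_sum_four_sq_eq_and_modEq {m A B : ℤ} (hm : 0 < m) (h : m ∣ A ^ 2 + B ^ 2 + 1) :
    ∃ r s t u : ℤ, r ^ 2 + s ^ 2 + t ^ 2 + u ^ 2 = m ∧
      r ≡ A * t + B * u [ZMOD m] ∧ s ≡ B * t - A * u [ZMOD m] := by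
  have hm' : (0 : ℝ) < m := by exact_mod_cast hm
  let T : Matrix (Fin 4) (Fin 4) ℝ := !![(m : ℝ), 0, A, B; 0, m, B, -A; 0, 0, 1, 0; 0, 0, 0, 1]
  have hdet : T.det = (m : ℝ) ^ 2 := by
    simp [T, det_succ_row_zero, Fin.sum_univ_succ, Fin.succAbove, sq]
  obtain ⟨z, hz, hlt⟩ := exists_ne_zero_dotProduct_mulVec_self_lt_two_mul hm' hdet
  set r := m * z 0 + A * z 2 + B * z 3 with hr
  set s := m * z 1 + B * z 2 - A * z 3 with hs
  have hlt_two_mul : r ^ 2 + s ^ 2 + z 2 ^ 2 + z 3 ^ 2 < 2 * m := by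
    have hTz : T *ᵥ (Int.cast ∘ z) = ![(r : ℝ), s, z 2, z 3] := by
      ext i
      fin_cases i <;> simp [T, hr, hs, mulVec, dotProduct, Fin.sum_univ_four, sub_eq_add_neg]
    simp only [hTz, dotProduct, Fin.sum_univ_four, cons_val, ← sq] at hlt
    exact_mod_cast hlt
  have hpos : 0 < r ^ 2 + s ^ 2 + z 2 ^ 2 + z 3 ^ 2 := by
    refine lt_of_le_of_ne (by positivity) fun hzero ↦ hz ?_
    have hr0 : r = 0 := by nlinarith
    have hs0 : s = 0 := by nlinarith
    have hz2 : z 2 = 0 := by nlinarith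
    have hz3 : z 3 = 0 := by nlinarith
    have hz0 : z 0 = 0 := by simpa [hr, hz2, hz3, hm.ne'] using hr0
    have hz1 : z 1 = 0 := by simpa [hs, hz2, hz3, hm.ne'] using hs0
    ext i
    fin_cases i <;> assumption
  have hdvd : m ∣ r ^ 2 + s ^ 2 + z 2 ^ 2 + z 3 ^ 2 := by
    obtain ⟨k, hk⟩ := h
    exact ⟨(z 2 ^ 2 + z 3 ^ 2) * k + m * z 0 ^ 2 + 2 * z 0 * (A * z 2 + B * z 3) +
      m * z 1 ^ 2 + 2 * z 1 * (B * z 2 - A * z 3), by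
        rw [hr, hs]; linear_combination (z 2 ^ 2 + z 3 ^ 2) * hk⟩
  obtain ⟨k, hk⟩ := hdvd
  obtain rfl : k = 1 := by
    rw [hk] at hlt_two_mul hpos
    have := pos_of_mul_pos_right hpos hm.le
    have : k < 2 := lt_of_mul_lt_mul_left (by linarith) hm.le
    lia
  exact ⟨r, s, z 2, z 3, by rw [hk, mul_one], Int.modEq_iff_dvd.mpr ⟨-z 0, by rw [hr]; ring⟩,
    Int.modEq_iff_dvd.mpr ⟨-z 1, by rw [hs]; ring⟩⟩

/- The last two coordinates `t`, `u` of an element of the ideal `x * ℍ[ℤ] + m * ℍ[ℤ]` determine it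
modulo `m`, since `x.imJ ^ 2 + x.imK ^ 2` is invertible: the first two are `A * t + B * u` and
`B * t - A * u`, with `A` and `B` as below. -/
theorem exists_normSq_eq_and_eq_mul_add_smul {m : ℤ} (hm : 0 < m) {x : ℍ[ℤ]}
    (hx : m ∣ normSq x) (hcop : IsCoprime m (x.imJ ^ 2 + x.imK ^ 2)) :
    ∃ q y w : ℍ[ℤ], normSq q = m ∧ q = x * y + m • w := by
  obtain ⟨f, e, hfe⟩ := hcop
  obtain ⟨g, hg⟩ := hx
  rw [normSq_def'] at hg
  obtain ⟨r, s, t, u, hsum, hr, hs⟩ := exists_sum_four_sq_eq_and_modEq hm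
    (A := e * (x.imJ * x.re - x.imI * x.imK)) (B := e * (x.imI * x.imJ + x.imK * x.re))
    ⟨(1 - f * m) * e * g + 2 * f - f ^ 2 * m, by
      linear_combination (e * g * m - e * (x.imJ ^ 2 + x.imK ^ 2) - 1 + f * m) * hfe +
        e ^ 2 * (x.imJ ^ 2 + x.imK ^ 2) * hg⟩
  obtain ⟨z₀, hz₀⟩ := hr.dvd
  obtain ⟨z₁, hz₁⟩ := hs.dvd
  let q : ℍ[ℤ] := ⟨r, s, t, u⟩
  let y : ℍ[ℤ] := ⟨e * (x.imJ * t + x.imK * u), e * (x.imK * t - x.imJ * u), 0, 0⟩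
  let w : ℍ[ℤ] := ⟨-z₀, -z₁, f * t, f * u⟩
  refine ⟨q, y, w, (normSq_def' q).trans hsum, ?_⟩
  apply Quaternion.ext <;>
    simp only [re_add, imI_add, imJ_add, imK_add, re_mul, imI_mul, imJ_mul, imK_mul, re_smul,
      imI_smul, imJ_smul, imK_smul, smul_eq_mul] <;>
    simp only [q, y, w]
  · linear_combination -hz₀
  · linear_combination -hz₁
  · linear_combination -t * hfe
  · linear_combination -u * hfe

theorem four_dvd_imJ_star_mul_mul {q v : ℍ[ℤ]} (hq : normSq q % 4 = 3) (hv : v.re = 0)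
    (ha : v.imI % 2 = 1) (hb : v.imJ % 4 = 2) (hc : v.imK % 4 = 2) :
    4 ∣ (star q * v * q).imJ := by
  have hmod : ∀ r s t u : ZMod 4, r ^ 2 + s ^ 2 + t ^ 2 + u ^ 2 = 3 →
      2 * (s * t - r * u) + 2 * (r ^ 2 - s ^ 2 + t ^ 2 - u ^ 2) = 0 := by decide
  obtain ⟨k, hk⟩ : ∃ k, v.imI = 2 * k + 1 := ⟨v.imI / 2, by lia⟩
  obtain ⟨l, hl⟩ : ∃ l, v.imJ = 4 * l + 2 := ⟨v.imJ / 4, by lia⟩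
  obtain ⟨j, hj⟩ : ∃ j, v.imK = 4 * j + 2 := ⟨v.imK / 4, by lia⟩
  have hq4 : (q.re : ZMod 4) ^ 2 + q.imI ^ 2 + q.imJ ^ 2 + q.imK ^ 2 = 3 := by
    rw [normSq_def'] at hq
    exact_mod_cast (ZMod.intCast_eq_intCast_iff' _ 3 4).mpr hq
  have h4 : (4 : ZMod 4) = 0 := rfl
  rw [← Nat.cast_ofNat, ← ZMod.intCast_zmod_eq_zero_iff_dvd]
  simp only [re_mul, imI_mul, imJ_mul, imK_mul, re_star, imI_star, imJ_star, imK_star, hv, hk, hl,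
    hj]
  push_cast
  have := hmod _ _ _ _ hq4
  linear_combination this + ((q.imI * q.imJ - q.re * q.imK : ZMod 4) * k +
    (q.re ^ 2 - q.imI ^ 2 + q.imJ ^ 2 - q.imK ^ 2) * l +
    (q.imJ * q.imK + q.re * q.imI) * (2 * j + 1)) * h4

theorem exists_eq_sum_three_sq_and_four_dvd {m t a b c : ℤ} (hm : 0 < m) (hm4 : m % 4 = 3)
    (hdvd : m ∣ t ^ 2 + (a ^ 2 + b ^ 2 + c ^ 2)) (hcop : IsCoprime m (b ^ 2 + c ^ 2))
    (ha : a % 2 = 1) (hb : b % 4 = 2) (hc : c % 4 = 2) :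
    ∃ a' b' c' : ℤ, a ^ 2 + b ^ 2 + c ^ 2 = a' ^ 2 + b' ^ 2 + c' ^ 2 ∧ 4 ∣ c' := by
  let x : ℍ[ℤ] := ⟨t, a, b, c⟩
  have hx : m ∣ normSq x := by
    rw [normSq_def']
    simpa only [add_assoc] using hdvd
  obtain ⟨q, y, w, hqm, hq⟩ := exists_normSq_eq_and_eq_mul_add_smul hm hx hcop
  obtain ⟨v, hv⟩ := exists_star_mul_im_mul_eq_smul hx hqm hq
  have hre : v.re = 0 := by
    have h0 := re_star_mul_mul x.re_im q
    rw [hv, re_smul, smul_eq_mul] at h0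
    exact (mul_eq_zero.mp h0).resolve_left hm.ne'
  have hnorm : normSq x.im = normSq v := by
    have h := congrArg normSq hv
    rw [map_mul, map_mul, normSq_star, hqm, normSq_smul] at h
    exact mul_left_cancel₀ (pow_ne_zero 2 hm.ne') (by linear_combination h)
  have h4 : 4 ∣ m * v.imJ := by
    rw [← smul_eq_mul, ← imJ_smul, ← hv]
    exact four_dvd_imJ_star_mul_mul (hqm ▸ hm4) x.re_im ha hb hc
  refine ⟨v.imI, v.imK, v.imJ, ?_, ?_⟩
  · rw [normSq_def', normSq_def', hre, re_im, imI_im, imJ_im, imK_im] at hnorm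
    linear_combination hnorm
  · have : IsCoprime 4 m := ⟨(m + 1) / 4, -1, by lia⟩
    exact this.dvd_of_dvd_mul_left h4

end QuaternionRotation

theorem exists_odd_even_even_of_sum_three_sq {a b c : ℤ} (h : (a ^ 2 + b ^ 2 + c ^ 2) % 4 = 1) :
    ∃ a' b' c' : ℤ, a ^ 2 + b ^ 2 + c ^ 2 = a' ^ 2 + b' ^ 2 + c' ^ 2 ∧
      a' % 2 = 1 ∧ b' % 2 = 0 ∧ c' % 2 = 0 := by
  have hsq (x : ℤ) : x % 2 = 0 ∧ x ^ 2 % 4 = 0 ∨ x % 2 = 1 ∧ x ^ 2 % 4 = 1 := by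
    rcases Int.even_or_odd x with hx | hx
    · exact .inl ⟨Int.even_iff.mp hx, Int.emod_eq_zero_of_dvd (pow_dvd_pow_of_dvd hx.two_dvd 2)⟩
    · exact .inr ⟨Int.odd_iff.mp hx, Int.sq_mod_four_eq_one_of_odd hx⟩
  rcases hsq a with ⟨ha, ha2⟩ | ⟨ha, ha2⟩
  · rcases hsq b with ⟨hb, hb2⟩ | ⟨hb, hb2⟩
    · exact ⟨c, a, b, by ring, by grind⟩
    · exact ⟨b, a, c, by ring, by grind⟩
  · exact ⟨a, b, c, rfl, by grind⟩

theorem three_squares_with_four_dvd (n : ℕ) (hn : 0 < n) (h8 : n % 8 = 1)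
    (h4 : ¬ 4 ∣ n) (hform : ¬ ∃ e m : ℕ, (n : ℤ) = 4 ^ e * (8 * m - 1)) :
    ∃ a b c : ℤ, (n : ℤ) = a ^ 2 + b ^ 2 + c ^ 2 ∧ 4 ∣ c := by
  by_cases hsq : IsSquare n
  · obtain ⟨k, rfl⟩ := hsq
    exact ⟨k, 0, 0, by push_cast; ring, dvd_zero 4⟩
  obtain ⟨a₀, b₀, c₀, h₀⟩ := exists_eq_sum_three_sq_of_mod_eight_eq_one h8
  obtain ⟨a, b, c, h, ha, hb, hc⟩ :=
    exists_odd_even_even_of_sum_three_sq (a := a₀) (b := b₀) (c := c₀) (by lia)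
  rw [h₀, h]
  by_cases hb4 : 4 ∣ b
  · exact ⟨a, c, b, by ring, hb4⟩
  by_cases hc4 : 4 ∣ c
  · exact ⟨a, b, c, rfl, hc4⟩
  obtain ⟨p, hp, hnp, hp4, hneg⟩ := exists_prime_isSquare_neg (by lia) hsq n
  obtain ⟨t, ht⟩ := exists_dvd_sq_add_of_isSquare (d := n) (by simpa using hneg)
  have hcop : IsCoprime (p : ℤ) (b ^ 2 + c ^ 2) := by
    have hb0 : b ≠ 0 := by lia
    refine (Nat.prime_iff_prime_int.mp hp).coprime_iff_not_dvd.mpr fun hdvd ↦ ?_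
    have hle := Int.le_of_dvd (by positivity) hdvd
    linarith [sq_nonneg a, (Nat.cast_lt (α := ℤ)).mpr hnp]
  exact exists_eq_sum_three_sq_and_four_dvd (by lia) (by lia) (by rwa [← h, ← h₀]) hcop
    ha (by lia) (by lia)
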